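/- arXiv:2412.07337 — 9 statements merged into one kernel-verified Lean document; each statement's English description precedes it below -/
import Mathlib

section
/- For every natural number n ≥ 3 and every d : Fin n → ℕ with 2 ≤ d i for all i and 8 < ∏ i, d i (total Hilbert-space dimension exceeding 8), there exists a state v : (∀ i : Fin n, Fin (d i)) → ℂ which is nonzero and not completely product, such that for every completely product state p : (∀ i : Fin n, Fin (d i)) → ℂ and all nonzero complex numbers a, b, the state a • v + b • p is not completely product. -/
/-!
The witness is the W tensor, the indicator of the points with exactly one excited site. No nonzero
multiple of it is a sum `⨂ f + ⨂ g` of two product tensors. To see this, contract site `i` with the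
functional `f i (u i) ⟨e i| - f i (e i) ⟨u i|`, where `e i` is the ground level and `u i` an excited
one. It kills `f i` and hence `⨂ f`, so a product tensor is left and its `2 × 2` minors vanish. For
the contracted W tensor, one of these minors is a nonzero multiple of `f i (u i) ^ 2`, so
`f i (u i) = 0`. By symmetry `g i (u i) = 0`, and then both products vanish at the point where only
site `i` is excited, where the W tensor does not.
-/

/-- An `n`-partite state is completely product if its coefficient tensor factorizes. -/
def CompletelyProduct {n : ℕ} {d : Fin n → ℕ}
    (v : (∀ i : Fin n, Fin (d i)) → ℂ) : Prop :=
  ∃ f : ∀ i : Fin n, Fin (d i) → ℂ, ∀ x, v x = ∏ i, f i (x i)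

open Finset Function

variable {ι : Type*} {κ : ι → Type*} {R : Type*}

section Contraction

variable [CommSemiring R] [DecidableEq ι]

/-- The contraction of a tensor with the functional `φ` at site `i`. The result is kept as a tensor
on all sites, constant in the coordinate `i`. -/
def siteContraction (i : ι) (φ : Module.Dual R (κ i → R)) (v : (∀ i, κ i) → R) : (∀ i, κ i) → R :=
  fun x => φ fun s => v (update x i s)

theorem siteContraction_add (i : ι) (φ : Module.Dual R (κ i → R)) (v w : (∀ i, κ i) → R) :
    siteContraction i φ (v + w) = siteContraction i φ v + siteContraction i φ w :=
  funext fun _ => map_add φ _ _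

theorem siteContraction_smul (i : ι) (φ : Module.Dual R (κ i → R)) (c : R) (v : (∀ i, κ i) → R) :
    siteContraction i φ (c • v) = c • siteContraction i φ v :=
  funext fun _ => map_smul φ c _

end Contraction

section ProductTensor

variable [Fintype ι] [CommSemiring R]

/-- The coefficient tensor of the product state `⨂ i, f i`. -/
def productTensor (f : ∀ i, κ i → R) (x : ∀ i, κ i) : R :=
  ∏ i, f i (x i)

/-- Complete factorization of a coefficient tensor, for any finite family of sites, any index types
and any commutative semiring of coefficients. -/
def IsProductTensor (v : (∀ i, κ i) → R) : Prop :=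
  ∃ f : ∀ i, κ i → R, v = productTensor f

theorem completelyProduct_iff_isProductTensor {n : ℕ} {d : Fin n → ℕ}
    {v : (∀ i : Fin n, Fin (d i)) → ℂ} : CompletelyProduct v ↔ IsProductTensor v :=
  exists_congr fun _ => funext_iff.symm

theorem isProductTensor_zero [Nonempty ι] : IsProductTensor (0 : (∀ i, κ i) → R) :=
  ⟨0, by ext x; simp [productTensor]⟩

theorem productTensor_update_update [DecidableEq ι] (f : ∀ i, κ i → R) (x : ∀ i, κ i) (i : ι)
    (h : κ i → R) (s : κ i) :
    productTensor (update f i h) (update x i s) = h s * ∏ j ∈ univ.erase i, f j (x j) := by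
  rw [productTensor, ← mul_prod_erase univ _ (mem_univ i), update_self, update_self]
  congr 1
  refine prod_congr rfl fun j hj => ?_
  rw [update_of_ne (ne_of_mem_erase hj), update_of_ne (ne_of_mem_erase hj)]

theorem smul_productTensor [DecidableEq ι] (c : R) (f : ∀ i, κ i → R) (i : ι) :
    c • productTensor f = productTensor (update f i (c • f i)) := by
  ext x
  have hf := productTensor_update_update f x i (f i) (x i)
  have hcf := productTensor_update_update f x i (c • f i) (x i)
  simp only [update_eq_self] at hf hcf
  simp only [Pi.smul_apply, smul_eq_mul, hf, hcf, mul_assoc]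

theorem IsProductTensor.smul [Nonempty ι] {v : (∀ i, κ i) → R} (hv : IsProductTensor v) (c : R) :
    IsProductTensor (c • v) := by
  classical
  obtain ⟨f, rfl⟩ := hv
  exact ⟨_, smul_productTensor c f (Classical.arbitrary ι)⟩

theorem siteContraction_productTensor [DecidableEq ι] (i : ι) (φ : Module.Dual R (κ i → R))
    (f : ∀ i, κ i → R) :
    siteContraction i φ (productTensor f) = productTensor (update f i fun _ => φ (f i)) := by
  ext x
  have hslice : (fun s => productTensor f (update x i s)) =
      (∏ j ∈ univ.erase i, f j (x j)) • f i := by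
    ext s
    simpa [mul_comm] using productTensor_update_update f x i (f i) s
  have hright := productTensor_update_update f x i (fun _ => φ (f i)) (x i)
  rw [update_eq_self] at hright
  rw [siteContraction, hslice, map_smul, smul_eq_mul, hright, mul_comm]

theorem siteContraction_productTensor_eq_zero [DecidableEq ι] {i : ι} {φ : Module.Dual R (κ i → R)}
    {f : ∀ i, κ i → R} (h : φ (f i) = 0) : siteContraction i φ (productTensor f) = 0 := by
  rw [siteContraction_productTensor, h]
  exact funext fun x => prod_eq_zero (mem_univ i) (by simp)

/-- For disjoint `S` and `T` this is the vanishing of the `2 × 2` minor with rows `∅, S` and columns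
`∅, T`. -/
theorem IsProductTensor.apply_piecewise_mul_apply_piecewise [DecidableEq ι]
    {v : (∀ i, κ i) → R} (hv : IsProductTensor v) (u e : ∀ i, κ i) (S T : Finset ι) :
    v (S.piecewise u e) * v (T.piecewise u e) =
      v ((S ∪ T).piecewise u e) * v ((S ∩ T).piecewise u e) := by
  obtain ⟨f, rfl⟩ := hv
  simp only [productTensor, ← prod_mul_distrib]
  refine prod_congr rfl fun i _ => ?_
  by_cases hS : i ∈ S <;> by_cases hT : i ∈ T <;> simp [hS, hT, mul_comm]

end ProductTensor

section WTensor

variable [Fintype ι] [∀ i, DecidableEq (κ i)] {e u : ∀ i, κ i}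

/-- The W tensor with ground levels `e`: the sum of all basis states with exactly one site not in
its ground level. For `κ i = Fin 2` and `e = 0` this is the usual (unnormalized) W state. -/
def wTensor [Zero R] [One R] (e x : ∀ i, κ i) : R :=
  if hammingDist x e = 1 then 1 else 0

theorem hammingDist_piecewise_left [DecidableEq ι] (hue : ∀ i, u i ≠ e i) (S : Finset ι) :
    hammingDist (S.piecewise u e) e = #S := by
  rw [hammingDist]
  congr 1
  ext i
  by_cases hi : i ∈ S <;> simp [hi, hue i]

theorem wTensor_piecewise [DecidableEq ι] [Zero R] [One R] (hue : ∀ i, u i ≠ e i) (S : Finset ι) :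
    wTensor e (S.piecewise u e) = if #S = 1 then (1 : R) else 0 := by
  rw [wTensor, hammingDist_piecewise_left hue]

theorem siteContraction_wTensor_piecewise [DecidableEq ι] [CommRing R] (hue : ∀ i, u i ≠ e i)
    (α β : R) {i : ι} {S : Finset ι} (hi : i ∉ S) :
    siteContraction i (α • LinearMap.proj (e i) - β • LinearMap.proj (u i)) (wTensor e)
        (S.piecewise u e) =
      (if #S = 1 then α else 0) - if #S = 0 then β else 0 := by
  have hground : update (S.piecewise u e) i (e i) = S.piecewise u e :=
    update_eq_self_iff.mpr (piecewise_eq_of_notMem S u e hi).symm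
  have hexcited : update (S.piecewise u e) i (u i) = (insert i S).piecewise u e :=
    (piecewise_insert S u e i).symm
  simp only [siteContraction, LinearMap.sub_apply, LinearMap.smul_apply, LinearMap.proj_apply,
    hground, hexcited, wTensor_piecewise hue, card_insert_of_notMem hi]
  simp

variable [CommRing R] [IsDomain R]

theorem eq_zero_of_isProductTensor_smul_siteContraction_wTensor [DecidableEq ι]
    (hue : ∀ i, u i ≠ e i) {i j k : ι} (hij : i ≠ j) (hik : i ≠ k) (hjk : j ≠ k) {c α β : R}
    (hc : c ≠ 0)
    (h : IsProductTensor (c • siteContraction i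
      (α • LinearMap.proj (e i) - β • LinearMap.proj (u i)) (wTensor (R := R) e))) :
    α = 0 := by
  have hminor := h.apply_piecewise_mul_apply_piecewise u e {j} {k}
  have hjk_union : #({j} ∪ {k} : Finset ι) = 2 := by simpa using card_pair hjk
  simp only [Pi.smul_apply, smul_eq_mul] at hminor
  rw [siteContraction_wTensor_piecewise hue α β (by simpa using hij),
    siteContraction_wTensor_piecewise hue α β (by simpa using hik),
    siteContraction_wTensor_piecewise hue α β (by simp [hij, hik]), hjk_union] at hminor
  simpa [hc] using hminor

theorem factor_apply_eq_zero_of_smul_wTensor_eq_add (hue : ∀ i, u i ≠ e i) {i j k : ι}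
    (hij : i ≠ j) (hik : i ≠ k) (hjk : j ≠ k) {c : R} (hc : c ≠ 0) {f g : ∀ i, κ i → R}
    (h : c • wTensor e = productTensor f + productTensor g) : f i (u i) = 0 := by
  classical
  let φ : Module.Dual R (κ i → R) :=
    f i (u i) • LinearMap.proj (e i) - f i (e i) • LinearMap.proj (u i)
  have hφ : φ (f i) = 0 := by simp [φ, mul_comm]
  refine eq_zero_of_isProductTensor_smul_siteContraction_wTensor hue hij hik hjk hc
    (β := f i (e i)) ⟨update g i fun _ => φ (g i), ?_⟩
  calc c • siteContraction i φ (wTensor e)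
      = siteContraction i φ (productTensor f) + siteContraction i φ (productTensor g) := by
        rw [← siteContraction_smul, h, siteContraction_add]
    _ = productTensor (update g i fun _ => φ (g i)) := by
        rw [siteContraction_productTensor_eq_zero hφ, zero_add, siteContraction_productTensor]

theorem smul_wTensor_ne_add (hue : ∀ i, u i ≠ e i) (hι : 2 < Fintype.card ι) {c : R} (hc : c ≠ 0)
    {p q : (∀ i, κ i) → R} (hp : IsProductTensor p) (hq : IsProductTensor q) :
    c • wTensor e ≠ p + q := by
  obtain ⟨f, rfl⟩ := hp
  obtain ⟨g, rfl⟩ := hq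
  intro h
  classical
  obtain ⟨i, j, k, hij, hik, hjk⟩ := Fintype.two_lt_card_iff.mp hι
  have hf : f i (u i) = 0 := factor_apply_eq_zero_of_smul_wTensor_eq_add hue hij hik hjk hc h
  have hg : g i (u i) = 0 := factor_apply_eq_zero_of_smul_wTensor_eq_add hue hij hik hjk hc
    (h.trans (add_comm _ _))
  have hw : c • wTensor e (({i} : Finset ι).piecewise u e) = c := by
    simp [wTensor_piecewise hue]
  have vanish : ∀ f : ∀ i, κ i → R, f i (u i) = 0 →
      productTensor f (({i} : Finset ι).piecewise u e) = 0 :=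
    fun f hf => prod_eq_zero (mem_univ i) (by simpa using hf)
  apply hc
  rw [← hw, ← Pi.smul_apply, h, Pi.add_apply, vanish f hf, vanish g hg, add_zero]

end WTensor

theorem exists_unconditionally_robust_of_dim_gt_eight_general
    {ι : Type*} [Fintype ι] (hι : 3 ≤ Fintype.card ι) {κ : ι → Type*} [∀ i, Nontrivial (κ i)]
    {R : Type*} [CommRing R] [IsDomain R] :
    ∃ v : (∀ i, κ i) → R,
      v ≠ 0 ∧ ¬ IsProductTensor v ∧
      ∀ p : (∀ i, κ i) → R, IsProductTensor p →
        ∀ a b : R, a ≠ 0 → ¬ IsProductTensor (a • v + b • p) := by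
  classical
  have : Nonempty ι := Fintype.card_pos_iff.mp (by lia)
  choose u e hue using fun i => exists_pair_ne (κ i)
  have hent : ¬ IsProductTensor (wTensor e : (∀ i, κ i) → R) := fun hw =>
    smul_wTensor_ne_add hue hι one_ne_zero hw isProductTensor_zero (by simp)
  refine ⟨wTensor e, fun h => hent (h ▸ isProductTensor_zero), hent, fun p hp a b ha hq => ?_⟩
  exact smul_wTensor_ne_add hue hι ha hq (hp.smul (-b)) (by simp)

/-- For every multipartite system of at least 3 parties with total dimension exceeding 8,
there exists an entangled state whose nontrivial superposition with an arbitrary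
completely product state is never completely product. -/
theorem exists_unconditionally_robust_of_dim_gt_eight
    (n : ℕ) (hn : 3 ≤ n) (d : Fin n → ℕ) (hd : ∀ i, 2 ≤ d i)
    (hdim : 8 < ∏ i, d i) :
    ∃ v : (∀ i : Fin n, Fin (d i)) → ℂ,
      v ≠ 0 ∧ ¬ CompletelyProduct v ∧
      ∀ p : (∀ i : Fin n, Fin (d i)) → ℂ, CompletelyProduct p →
        ∀ a b : ℂ, a ≠ 0 → b ≠ 0 → ¬ CompletelyProduct (a • v + b • p) := by
  have (i : Fin n) : Nontrivial (Fin (d i)) := Fin.nontrivial_iff_two_le.mpr (hd i)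
  simp only [completelyProduct_iff_isProductTensor]
  obtain ⟨v, hv, hent, hrobust⟩ :=
    exists_unconditionally_robust_of_dim_gt_eight_general (R := ℂ) (κ := fun i => Fin (d i))
      (hn.trans_eq (Fintype.card_fin n).symm)
  exact ⟨v, hv, hent, fun p hp a b ha _ => hrobust p hp a b ha⟩
end

section
/- There exist unit vectors α, α' : Fin 2 → ℂ with ⟨α, α'⟩ = 0, a two-qubit entangled state Φ, a two-qubit product state Φ' with ⟨Φ, Φ'⟩ = 0, nonzero real numbers c, d with c² + d² = 1, a completely product three-qubit state p, and nonzero complex numbers a, b, such that the superposed state a • (c • (α ⊗ Φ) + d • (α' ⊗ Φ')) + b • p is completely product. (Thus the mere Schmidt form with Φ entangled and Φ' product does not guarantee inseparability of the superposition.) -/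
/-- Tensor product of two single-qubit vectors, as a two-qubit coefficient matrix. -/
def tq (x y : Fin 2 → ℂ) : Fin 2 → Fin 2 → ℂ := fun j k => x j * y k

/-- Tensor product of a single-qubit vector with a two-qubit state, giving a
three-qubit coefficient tensor. -/
def tqq (α : Fin 2 → ℂ) (w : Fin 2 → Fin 2 → ℂ) : Fin 2 → Fin 2 → Fin 2 → ℂ :=
  fun i j k => α i * w j k

/-- A two-qubit state is a product state if its coefficient matrix factorizes. -/
def ProdState (w : Fin 2 → Fin 2 → ℂ) : Prop :=
  ∃ f g : Fin 2 → ℂ, ∀ j k, w j k = f j * g k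

/-- A two-qubit state is entangled if it is nonzero and not a product state. -/
def Entangled2 (w : Fin 2 → Fin 2 → ℂ) : Prop := w ≠ 0 ∧ ¬ ProdState w

/-- A three-qubit state is completely product if its coefficient tensor factorizes. -/
def CompProd3 (v : Fin 2 → Fin 2 → Fin 2 → ℂ) : Prop :=
  ∃ f g h : Fin 2 → ℂ, ∀ i j k, v i j k = f i * g j * h k

/-- Hermitian inner product on single-qubit vectors. -/
noncomputable def ip1 (u v : Fin 2 → ℂ) : ℂ := ∑ i, (starRingEnd ℂ) (u i) * v i

/-- Hermitian inner product on two-qubit states. -/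
noncomputable def ip2 (u v : Fin 2 → Fin 2 → ℂ) : ℂ := ∑ j, ∑ k, (starRingEnd ℂ) (u j k) * v j k

/-- Hermitian inner product on three-qubit states. -/
noncomputable def ip3 (u v : Fin 2 → Fin 2 → Fin 2 → ℂ) : ℂ :=
  ∑ i, ∑ j, ∑ k, (starRingEnd ℂ) (u i j k) * v i j k

/-! Let `Φ'` be a product state and let `Φ = v + s • Φ'` with `v` another product state. Adding a
suitable multiple of the completely product state `α ⊗ v` to `c • (α ⊗ Φ) + d • (α' ⊗ Φ')` cancels
the `v` part, and what remains is `(c s • α + d • α') ⊗ Φ'`. Taking `Φ' = |00⟩` and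
`Φ = (|0⟩ + |1⟩) ⊗ (|0⟩ + |1⟩) - |00⟩ = |01⟩ + |10⟩ + |11⟩` makes `Φ` entangled and orthogonal to
`Φ'`. -/

theorem prodState_tq (x y : Fin 2 → ℂ) : ProdState (tq x y) :=
  ⟨x, y, fun _ _ => rfl⟩

namespace ProdState

variable {w : Fin 2 → Fin 2 → ℂ}

theorem det_eq_zero (hw : ProdState w) : (Matrix.of w).det = 0 := by
  obtain ⟨f, g, hfg⟩ := hw
  have w_eq : Matrix.of w = Matrix.vecMulVec f g := Matrix.ext hfg
  rw [w_eq, Matrix.det_vecMulVec]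

theorem compProd3_tqq (hw : ProdState w) (α : Fin 2 → ℂ) : CompProd3 (tqq α w) := by
  obtain ⟨f, g, hfg⟩ := hw
  exact ⟨α, f, g, fun i j k => by rw [tqq, hfg, mul_assoc]⟩

theorem compProd3_superposition (hw : ProdState w) (α α' : Fin 2 → ℂ) (v : Fin 2 → Fin 2 → ℂ)
    {a b c : ℂ} (d s : ℂ) (hcancel : a * c + b = 0) :
    CompProd3 (a • (c • tqq α (v + s • w) + d • tqq α' w) + b • tqq α v) := by
  have superposition_eq : a • (c • tqq α (v + s • w) + d • tqq α' w) + b • tqq α v =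
      tqq (a • ((c * s) • α + d • α')) w := by
    ext i j k
    simp only [tqq, Pi.add_apply, Pi.smul_apply, smul_eq_mul]
    linear_combination α i * v j k * hcancel
  rw [superposition_eq]
  exact hw.compProd3_tqq _

end ProdState

theorem entangled2_of_det_ne_zero {w : Fin 2 → Fin 2 → ℂ} (hw : (Matrix.of w).det ≠ 0) :
    Entangled2 w := by
  refine ⟨?_, fun hprod => hw hprod.det_eq_zero⟩
  rintro rfl
  exact hw (by simp)

/-- There exist a Schmidt-form three-qubit entangled state (with `Φ` entangled and
`Φ'` product) and a completely product state whose nontrivial superposition is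
completely product. -/
theorem exists_superposition_completely_product :
    ∃ (α α' : Fin 2 → ℂ) (Φ Φ' : Fin 2 → Fin 2 → ℂ) (c d : ℝ)
      (p : Fin 2 → Fin 2 → Fin 2 → ℂ) (a b : ℂ),
      ip1 α α = 1 ∧ ip1 α' α' = 1 ∧ ip1 α α' = 0 ∧
      Entangled2 Φ ∧ ProdState Φ' ∧ ip2 Φ Φ' = 0 ∧
      c ≠ 0 ∧ d ≠ 0 ∧ c ^ 2 + d ^ 2 = 1 ∧
      CompProd3 p ∧ a ≠ 0 ∧ b ≠ 0 ∧
      CompProd3 (a • ((c : ℂ) • tqq α Φ + (d : ℂ) • tqq α' Φ') + b • p) := by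
  let Φ' := tq ![1, 0] ![1, 0]
  let v := tq ![1, 1] ![1, 1]
  let Φ := v + (-1 : ℂ) • Φ'
  have hΦ : Entangled2 Φ :=
    entangled2_of_det_ne_zero (by simp [Φ, Φ', v, tq, Matrix.det_fin_two])
  have hΦ' : ProdState Φ' := prodState_tq _ _
  have horth : ip2 Φ Φ' = 0 := by simp [ip2, Φ, Φ', v, tq]
  have hp : CompProd3 (tqq ![1, 0] v) := (prodState_tq _ _).compProd3_tqq _
  have hsuper := hΦ'.compProd3_superposition ![1, 0] ![0, 1] v (a := 1)
    (b := -(3 / 5 : ℝ)) (c := (3 / 5 : ℝ)) (4 / 5 : ℝ) (-1) (by ring)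
  exact ⟨![1, 0], ![0, 1], Φ, Φ', 3 / 5, 4 / 5, tqq ![1, 0] v, 1, -(3 / 5 : ℝ),
    by simp [ip1], by simp [ip1], by simp [ip1], hΦ, hΦ', horth,
    by norm_num, by norm_num, by norm_num, hp, one_ne_zero, by norm_num, hsuper⟩
end

section
/- Let α, α' : Fin 2 → ℂ be orthonormal, let (u₀, u₁) and (w₀, w₁) be orthonormal bases of ℂ², let s, t be nonzero real numbers with s² + t² = 1, and set Φ = s • (u₀ ⊗ w₀) + t • (u₁ ⊗ w₁). Let Φ' be a nonzero two-qubit product state with ⟨u₀ ⊗ w₀, Φ'⟩ = 0 and ⟨u₁ ⊗ w₁, Φ'⟩ = 0. Let c, d be nonzero real numbers with c² + d² = 1 and set Ψ = c • (α ⊗ Φ) + d • (α' ⊗ Φ'). Then for every completely product three-qubit state p and all nonzero complex numbers a, b, the state a • Ψ + b • p is not completely product (hence it is entangled in at least one bipartition). -/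
/-!
Let `α`, `α'` be linearly independent, let `A`, `B` be `n × n` matrices with `A` invertible, and
suppose that `α ⊗ A + α' ⊗ B` is a sum of `n` product tensors. Contracting the first factor with
functionals dual to `α`, `α'` gives `A = G * diagonal x * H` and `B = G * diagonal y * H`, so
`A⁻¹ * B` is similar to a diagonal matrix. It is therefore not nilpotent unless `B = 0`.

If `A = ∑ r, s r • u r ⊗ w r` with orthonormal `u`, `w`, and `B = x ⊗ y` is orthogonal to every
`u r ⊗ w r`, then `y ⬝ᵥ A⁻¹ *ᵥ x = ∑ r, (s r)⁻¹ * ⟨w r, y⟩ * ⟨u r, x⟩` vanishes term by term, which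
makes the rank-one matrix `A⁻¹ * B` nilpotent. Hence `α ⊗ A + α' ⊗ B` has tensor rank greater than
`n`. For qubits `n = 2`, whereas a completely product superposition of this tensor with a product
tensor would exhibit it as a sum of two product tensors.
-/

open Matrix

theorem exists_dual_apply_eq_single_of_linearIndependent {ι K V : Type*} [Field K]
    [AddCommGroup V] [Module K V] {v : ι → V} (hv : LinearIndependent K v) :
    ∃ φ : ι → Module.Dual K V, ∀ l l', φ l (v l') = Finsupp.single l' 1 l := by
  obtain ⟨L, hL⟩ :=
    (Finsupp.linearCombination K v).exists_leftInverse_of_injective (LinearMap.ker_eq_bot.2 hv)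
  refine ⟨fun l ↦ Finsupp.lapply l ∘ₗ L, fun l l' ↦ ?_⟩
  have hLv : L (v l') = Finsupp.single l' 1 := by
    simpa using LinearMap.congr_fun hL (Finsupp.single l' 1)
  simp [hLv]

/-- The coefficient matrix of the two-party state `∑ r, s r • u r ⊗ w r`. It is a Schmidt
decomposition when the families `u` and `w` are orthonormal, which the definition does not
require. -/
def schmidtMatrix {ρ m n R : Type*} [CommSemiring R] [Fintype ρ] (s : ρ → R) (u : ρ → m → R)
    (w : ρ → n → R) : Matrix m n R :=
  ∑ r, s r • vecMulVec (u r) (w r)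

theorem schmidtMatrix_eq_mul_diagonal_mul {ρ m n R : Type*} [CommSemiring R] [Fintype ρ]
    [DecidableEq ρ] (s : ρ → R) (u : ρ → m → R) (w : ρ → n → R) :
    schmidtMatrix s u w = (of u)ᵀ * diagonal s * of w := by
  ext j k
  rw [schmidtMatrix, mul_apply, Matrix.sum_apply]
  refine Finset.sum_congr rfl fun r _ ↦ ?_
  simp only [mul_diagonal, transpose_apply, Matrix.smul_apply, vecMulVec_apply, smul_eq_mul,
    of_apply]
  ring

section Pencil

variable {n R : Type*} [Fintype n] [DecidableEq n] [CommRing R]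

theorem eq_zero_of_isNilpotent_diagonal_inv_mul_diagonal [IsReduced R] {x y : n → R}
    (hx : IsUnit (diagonal x)) (hN : IsNilpotent ((diagonal x)⁻¹ * diagonal y)) : y = 0 := by
  rw [inv_diagonal, diagonal_mul_diagonal'] at hN
  have hxy : Ring.inverse x * y = 0 :=
    ((IsNilpotent.map_iff (f := diagonalRingHom n R) diagonal_injective).1 hN).eq_zero
  rw [← Ring.mul_inverse_cancel_left x y (isUnit_diagonal.1 hx), hxy, mul_zero]

theorem mul_diagonal_mul_eq_zero_of_isNilpotent_inv_mul [IsReduced R] {G H : Matrix n n R}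
    {x y : n → R} (hA : IsUnit (G * diagonal x * H))
    (hN : IsNilpotent ((G * diagonal x * H)⁻¹ * (G * diagonal y * H))) :
    G * diagonal y * H = 0 := by
  obtain ⟨⟨hG, hx⟩, hH⟩ := IsUnit.mul_iff.1 hA |>.imp_left IsUnit.mul_iff.1
  obtain ⟨H, rfl⟩ := hH
  obtain ⟨k, hk⟩ := hN
  have hsim : (G * diagonal x * (H : Matrix n n R))⁻¹ * (G * diagonal y * H) =
      ((H⁻¹ : (Matrix n n R)ˣ) : Matrix n n R) * ((diagonal x)⁻¹ * diagonal y) * H := by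
    rw [Matrix.mul_inv_rev, Matrix.mul_inv_rev, coe_units_inv]
    simp only [Matrix.mul_assoc]
    rw [nonsing_inv_mul_cancel_left _ _ (G.isUnit_iff_isUnit_det.1 hG)]
  rw [hsim, Units.conj_pow', Units.mul_left_eq_zero, Units.mul_right_eq_zero] at hk
  rw [eq_zero_of_isNilpotent_diagonal_inv_mul_diagonal hx ⟨k, hk⟩]
  simp

theorem isNilpotent_mul_vecMulVec_of_dotProduct_eq_zero {M : Matrix n n R} {x y : n → R}
    (h : y ⬝ᵥ M *ᵥ x = 0) : IsNilpotent (M * vecMulVec x y) :=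
  ⟨2, by rw [mul_vecMulVec, sq, vecMulVec_mul_vecMulVec, h, zero_smul, vecMulVec_zero]⟩

end Pencil

section Schmidt

variable {n K : Type*} [Fintype n] [DecidableEq n] [Field K] [StarRing K]
  {u w : n → n → K} {s : n → K}

theorem schmidtMatrix_mul_schmidtMatrix_inv_star (hu : of u ∈ unitaryGroup n K)
    (hw : of w ∈ unitaryGroup n K) (hs : ∀ r, s r ≠ 0) :
    schmidtMatrix s u w * schmidtMatrix s⁻¹ (star w) (star u) = 1 := by
  have hw' : of w * (of w)ᴴ = 1 := mem_unitaryGroup_iff.1 hw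
  have hu' : (of u)ᵀ * (of u)ᴴᵀ = 1 := by
    rw [← transpose_mul, ← star_eq_conjTranspose, mem_unitaryGroup_iff'.1 hu, transpose_one]
  have hss : diagonal s * diagonal s⁻¹ = 1 := by
    simp [diagonal_mul_diagonal, hs]
  calc schmidtMatrix s u w * schmidtMatrix s⁻¹ (star w) (star u)
      = ((of u)ᵀ * diagonal s * of w) * ((of w)ᴴ * diagonal s⁻¹ * (of u)ᴴᵀ) := by
        rw [schmidtMatrix_eq_mul_diagonal_mul, schmidtMatrix_eq_mul_diagonal_mul]
        rfl
    _ = (of u)ᵀ * (diagonal s * (of w * (of w)ᴴ) * diagonal s⁻¹) * (of u)ᴴᵀ := by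
        simp only [Matrix.mul_assoc]
    _ = 1 := by rw [hw', mul_one, hss, mul_one, hu']

theorem isNilpotent_inv_schmidtMatrix_mul_vecMulVec {x y : n → K} (hu : of u ∈ unitaryGroup n K)
    (hw : of w ∈ unitaryGroup n K) (hs : ∀ r, s r ≠ 0)
    (ho : ∀ r, star (u r) ⬝ᵥ vecMulVec x y *ᵥ star (w r) = 0) :
    IsNilpotent ((schmidtMatrix s u w)⁻¹ * vecMulVec x y) := by
  apply isNilpotent_mul_vecMulVec_of_dotProduct_eq_zero
  rw [inv_eq_right_inv (schmidtMatrix_mul_schmidtMatrix_inv_star hu hw hs), schmidtMatrix,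
    sum_mulVec, dotProduct_sum]
  refine Finset.sum_eq_zero fun r _ ↦ ?_
  have hor : star (u r) ⬝ᵥ x * (y ⬝ᵥ star (w r)) = 0 := by
    rw [← ho r, vecMulVec_mulVec, dotProduct_smul, op_smul_eq_mul]
  calc y ⬝ᵥ (s⁻¹ r • vecMulVec (star (w r)) (star (u r))) *ᵥ x
      = s⁻¹ r * (star (u r) ⬝ᵥ x * (y ⬝ᵥ star (w r))) := by
        rw [smul_mulVec, vecMulVec_mulVec, dotProduct_smul, dotProduct_smul,
          op_smul_eq_mul, smul_eq_mul, mul_comm (y ⬝ᵥ _)]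
    _ = 0 := by rw [hor, mul_zero]

end Schmidt

/-- The tensor with slices `T i` is a sum of product tensors indexed by `ρ`, that is, its tensor
rank is at most the cardinality of `ρ`. A three-index tensor is encoded as a family of matrices,
indexed by its first index. -/
def TensorRankLE {κ m n R : Type*} [CommSemiring R] (ρ : Type*) [Fintype ρ]
    (T : κ → Matrix m n R) : Prop :=
  ∃ (f : ρ → κ → R) (g : ρ → m → R) (h : ρ → n → R),
    ∀ i j k, T i j k = ∑ r, f r i * g r j * h r k

namespace TensorRankLE

variable {κ m n ρ : Type*} [Fintype ρ] [DecidableEq ρ]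

theorem exists_contraction_eq_mul_diagonal_mul {R : Type*} [CommSemiring R]
    {T : κ → Matrix m n R} (hT : TensorRankLE ρ T) :
    ∃ (f : ρ → κ → R) (G : Matrix m ρ R) (H : Matrix ρ n R), ∀ φ : Module.Dual R (κ → R),
      (of fun j k ↦ φ fun i ↦ T i j k) = G * diagonal (φ ∘ f) * H := by
  obtain ⟨f, g, h, hT⟩ := hT
  refine ⟨f, (of g)ᵀ, of h, fun φ ↦ ?_⟩
  ext j k
  have hfibre : (fun i ↦ T i j k) = ∑ r, (g r j * h r k) • f r := by
    ext i
    simp only [hT, Finset.sum_apply, Pi.smul_apply, smul_eq_mul]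
    exact Finset.sum_congr rfl fun r _ ↦ by ring
  rw [of_apply, hfibre, map_sum, ← schmidtMatrix_eq_mul_diagonal_mul, schmidtMatrix,
    Matrix.sum_apply]
  refine Finset.sum_congr rfl fun r _ ↦ ?_
  rw [map_smul, smul_eq_mul, mul_comm]
  rfl

theorem exists_eq_mul_diagonal_mul {ι K : Type*} [Fintype ι] [Field K] {α : ι → κ → K}
    (hα : LinearIndependent K α) {A : ι → Matrix m n K}
    (hT : TensorRankLE ρ fun i ↦ ∑ l, α l i • A l) :
    ∃ (G : Matrix m ρ K) (x : ι → ρ → K) (H : Matrix ρ n K), ∀ l, A l = G * diagonal (x l) * H := by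
  classical
  obtain ⟨φ, hφ⟩ := exists_dual_apply_eq_single_of_linearIndependent hα
  obtain ⟨f, G, H, hcontract⟩ := hT.exists_contraction_eq_mul_diagonal_mul
  refine ⟨G, fun l ↦ φ l ∘ f, H, fun l ↦ ?_⟩
  rw [← hcontract]
  ext j k
  have hfibre : (fun i ↦ (∑ l', α l' i • A l') j k) = ∑ l', A l' j k • α l' := by
    ext i
    simp [Matrix.sum_apply, mul_comm]
  rw [of_apply, hfibre]
  simp [hφ, Finsupp.single_apply]

end TensorRankLE

theorem not_tensorRankLE_of_isNilpotent_inv_mul {κ n K : Type*} [Fintype n] [DecidableEq n]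
    [Field K] {α α' : κ → K} (hα : LinearIndependent K ![α, α']) {A B : Matrix n n K}
    (hA : IsUnit A) (hB : B ≠ 0) (hN : IsNilpotent (A⁻¹ * B)) :
    ¬ TensorRankLE n fun i ↦ α i • A + α' i • B := by
  intro hT
  have hT' : TensorRankLE n fun i ↦ ∑ l, ![α, α'] l i • ![A, B] l := by
    simpa [Fin.sum_univ_two] using hT
  obtain ⟨G, x, H, hAB⟩ := hT'.exists_eq_mul_diagonal_mul hα
  obtain rfl : A = G * diagonal (x 0) * H := hAB 0
  obtain rfl : B = G * diagonal (x 1) * H := hAB 1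
  exact hB (mul_diagonal_mul_eq_zero_of_isNilpotent_inv_mul hA hN)

theorem unconditional_inseparability_of_superposition_general {κ n K : Type*} [Fintype n]
    [DecidableEq n] [Field K] [StarRing K] {α α' : κ → K} (hα : LinearIndependent K ![α, α'])
    {u w : n → n → K} (hu : of u ∈ unitaryGroup n K) (hw : of w ∈ unitaryGroup n K)
    {s : n → K} (hs : ∀ r, s r ≠ 0) {Φ' : Matrix n n K} (hΦ' : Φ' ≠ 0)
    (hΦ'p : ∃ x y, Φ' = vecMulVec x y) (ho : ∀ r, star (u r) ⬝ᵥ Φ' *ᵥ star (w r) = 0)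
    {c d : K} (hc : c ≠ 0) (hd : d ≠ 0) :
    ¬ TensorRankLE n fun i ↦ c • α i • schmidtMatrix s u w + d • α' i • Φ' := by
  obtain ⟨x, y, rfl⟩ := hΦ'p
  have hcd : LinearIndependent K ![c • α, d • α'] := by
    simpa using (LinearIndependent.pair_smul_smul_iff hc.isUnit hd.isUnit).2 hα
  simpa only [smul_smul, Pi.smul_apply, smul_eq_mul] using
    not_tensorRankLE_of_isNilpotent_inv_mul hcd
      (IsUnit.of_mul_eq_one _ (schmidtMatrix_mul_schmidtMatrix_inv_star hu hw hs)) hΦ'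
      (isNilpotent_inv_schmidtMatrix_mul_vecMulVec hu hw hs ho)

section Qubits

theorem of_mem_unitaryGroup_of_ip1 {u v : Fin 2 → ℂ} (hu : ip1 u u = 1) (hv : ip1 v v = 1)
    (huv : ip1 u v = 0) : of ![u, v] ∈ unitaryGroup (Fin 2) ℂ := by
  have hvu : ip1 v u = 0 := by
    simpa [ip1, mul_comm] using congrArg (starRingEnd ℂ) huv
  simp only [ip1, Fin.sum_univ_two] at hu hv huv hvu
  rw [mem_unitaryGroup_iff]
  ext i j
  fin_cases i <;> fin_cases j <;> simp [mul_apply, mul_comm (_ : ℂ) (starRingEnd ℂ _), *]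

theorem ip2_tq (x y : Fin 2 → ℂ) (M : Fin 2 → Fin 2 → ℂ) :
    ip2 (tq x y) M = star x ⬝ᵥ of M *ᵥ star y := by
  simp only [ip2, tq, dotProduct, mulVec, of_apply, Pi.star_apply, Finset.mul_sum, map_mul,
    starRingEnd_apply]
  exact Finset.sum_congr rfl fun j _ ↦ Finset.sum_congr rfl fun k _ ↦ by ring

theorem CompProd3.tensorRankLE_of_smul_add_smul {Ψ p : Fin 2 → Fin 2 → Fin 2 → ℂ} {a b : ℂ}
    (ha : a ≠ 0) (hp : CompProd3 p) (h : CompProd3 (a • Ψ + b • p)) :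
    TensorRankLE (Fin 2) fun i ↦ of (Ψ i) := by
  obtain ⟨f₀, g₀, h₀, hp⟩ := hp
  obtain ⟨f₁, g₁, h₁, hq⟩ := h
  refine ⟨![a⁻¹ • f₁, -(a⁻¹ * b) • f₀], ![g₁, g₀], ![h₁, h₀], fun i j k ↦ ?_⟩
  have hijk : a * Ψ i j k + b * (f₀ i * g₀ j * h₀ k) = f₁ i * g₁ j * h₁ k := by
    rw [← hp, ← hq]
    rfl
  calc Ψ i j k = a⁻¹ * (f₁ i * g₁ j * h₁ k) + -(a⁻¹ * b) * (f₀ i * g₀ j * h₀ k) := by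
        rw [← hijk]
        field_simp
        ring
    _ = ∑ r, ![a⁻¹ • f₁, -(a⁻¹ * b) • f₀] r i * ![g₁, g₀] r j * ![h₁, h₀] r k := by
        simp [Fin.sum_univ_two, mul_assoc]

end Qubits

/-- Proposition 2 (unconditional inseparability of superposition): if
`Ψ = c • α ⊗ Φ + d • α' ⊗ Φ'` with `Φ = s • u₀⊗w₀ + t • u₁⊗w₁` entangled and `Φ'`
a nonzero product state orthogonal to both product terms of the Schmidt
decomposition of `Φ`, then any nontrivial superposition of `Ψ` with a completely
product state is never completely product. -/
theorem unconditional_inseparability_of_superposition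
    (α α' u₀ u₁ w₀ w₁ : Fin 2 → ℂ)
    (hαn : ip1 α α = 1) (hα'n : ip1 α' α' = 1) (hαα' : ip1 α α' = 0)
    (hu₀ : ip1 u₀ u₀ = 1) (hu₁ : ip1 u₁ u₁ = 1) (hu : ip1 u₀ u₁ = 0)
    (hw₀ : ip1 w₀ w₀ = 1) (hw₁ : ip1 w₁ w₁ = 1) (hw : ip1 w₀ w₁ = 0)
    (s t : ℝ) (hs : s ≠ 0) (ht : t ≠ 0) (hst : s ^ 2 + t ^ 2 = 1)
    (Φ' : Fin 2 → Fin 2 → ℂ) (hΦ'0 : Φ' ≠ 0) (hΦ'p : ProdState Φ')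
    (ho0 : ip2 (tq u₀ w₀) Φ' = 0) (ho1 : ip2 (tq u₁ w₁) Φ' = 0)
    (c d : ℝ) (hc : c ≠ 0) (hd : d ≠ 0) (hcd : c ^ 2 + d ^ 2 = 1) :
    ∀ p : Fin 2 → Fin 2 → Fin 2 → ℂ, CompProd3 p →
      ∀ a b : ℂ, a ≠ 0 → b ≠ 0 →
        ¬ CompProd3 (a • ((c : ℂ) • tqq α ((s : ℂ) • tq u₀ w₀ + (t : ℂ) • tq u₁ w₁)
            + (d : ℂ) • tqq α' Φ') + b • p) := by
  intro p hp a b ha _ hq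
  obtain ⟨x, y, hxy⟩ := hΦ'p
  have hα : of ![α, α'] ∈ unitaryGroup (Fin 2) ℂ := of_mem_unitaryGroup_of_ip1 hαn hα'n hαα'
  refine unconditional_inseparability_of_superposition_general (s := ![(s : ℂ), (t : ℂ)])
    (linearIndependent_rows_of_isUnit (Unitary.isUnit_coe (U := ⟨_, hα⟩)))
    (of_mem_unitaryGroup_of_ip1 hu₀ hu₁ hu) (of_mem_unitaryGroup_of_ip1 hw₀ hw₁ hw)
    (by simp [Fin.forall_fin_two, hs, ht]) (Φ' := of Φ') hΦ'0 ⟨x, y, Matrix.ext hxy⟩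
    (Fin.forall_fin_two.2 ⟨(ip2_tq u₀ w₀ Φ').symm.trans ho0, (ip2_tq u₁ w₁ Φ').symm.trans ho1⟩)
    (Complex.ofReal_ne_zero.2 hc) (Complex.ofReal_ne_zero.2 hd) ?_
  rw [schmidtMatrix, Fin.sum_univ_two]
  exact CompProd3.tensorRankLE_of_smul_add_smul ha hp hq
end

section
/- Let (u₀, u₁) and (w₀, w₁) be orthonormal bases of ℂ², let s, t be nonzero real numbers, and set Φ = s • (u₀ ⊗ w₀) + t • (u₁ ⊗ w₁). Let Φ' be a nonzero two-qubit product state with ⟨u₀ ⊗ w₀, Φ'⟩ = 0 and ⟨u₁ ⊗ w₁, Φ'⟩ = 0. Then for all complex numbers u, v with u ≠ 0, the two-qubit state u • Φ + v • Φ' is entangled (nonzero and not a product state). -/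
open Matrix

section Rank

variable {R ι m n : Type*} [CommRing R] [Fintype ι] [DecidableEq ι]

theorem det_diagonal_add_vecMulVec_of_mul_eq_zero {σ f g : ι → R} (hσ : ∀ i, IsUnit (σ i))
    (hfg : ∀ i, f i * g i = 0) : (diagonal σ + vecMulVec f g).det = ∏ i, σ i := by
  have hdet : IsUnit (diagonal σ).det := by
    simpa only [det_diagonal, IsUnit.prod_univ_iff] using hσ
  have hcorrection : g ⬝ᵥ (diagonal σ)⁻¹ *ᵥ f = 0 := by
    rw [inv_diagonal]
    refine Finset.sum_eq_zero fun i _ => ?_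
    rw [mulVec_diagonal, mul_left_comm, mul_comm (g i), hfg, mul_zero]
  rw [vecMulVec_eq Unit, det_add_replicateCol_mul_replicateRow hdet, Matrix.mul_assoc,
    ← replicateCol_mulVec, det_one_add_mul_comm, det_one_add_replicateCol_mul_replicateRow,
    hcorrection, add_zero, mul_one, det_diagonal]

variable [Fintype m] [Fintype n]

theorem mul_sum_smul_vecMulVec_mul_eq_diagonal {L : Matrix ι m R} {N : Matrix n ι R}
    {x : ι → m → R} {y : ι → n → R} (hL : ∀ i, L *ᵥ x i = Pi.single i 1)
    (hN : ∀ i, y i ᵥ* N = Pi.single i 1) (σ : ι → R) :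
    L * (∑ i, σ i • vecMulVec (x i) (y i)) * N = diagonal σ := by
  simp only [Matrix.mul_sum, Matrix.sum_mul, Matrix.mul_smul, Matrix.smul_mul, mul_vecMulVec,
    vecMulVec_mul, hL, hN, ← single_eq_single_vecMulVec_single, smul_single, smul_eq_mul, mul_one,
    sum_single_eq_diagonal]

theorem card_le_rank_of_isUnit_det_mul_mul [Nontrivial R] {L : Matrix ι m R} {M : Matrix m n R}
    {N : Matrix n ι R} (h : IsUnit (L * M * N).det) : Fintype.card ι ≤ M.rank :=
  calc
    Fintype.card ι = (L * M * N).rank := (rank_of_isUnit _ ((isUnit_iff_isUnit_det _).2 h)).symm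
    _ ≤ (L * M).rank := rank_mul_le_left _ _
    _ ≤ M.rank := rank_mul_le_right _ _

/-- For orthonormal `x` and `y`, the dual families `x'` and `y'` are the entrywise conjugates. -/
theorem lin_comb_entangled_general [Nontrivial R] {x x' : ι → m → R} {y y' : ι → n → R}
    (hx : ∀ i j, x' i ⬝ᵥ x j = if i = j then 1 else 0)
    (hy : ∀ i j, y' i ⬝ᵥ y j = if i = j then 1 else 0)
    {σ : ι → R} (hσ : ∀ i, IsUnit (σ i)) {p : m → R} {q : n → R}
    (hpq : ∀ i, (x' i ⬝ᵥ p) * (y' i ⬝ᵥ q) = 0) {u : R} (hu : IsUnit u) (v : R) :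
    Fintype.card ι ≤ (u • ∑ i, σ i • vecMulVec (x i) (y i) + v • vecMulVec p q).rank := by
  have hL (i : ι) : of x' *ᵥ x i = Pi.single i 1 := by
    ext j
    simp [mulVec, hx, Pi.single_apply]
  have hN (i : ι) : y i ᵥ* (of y')ᵀ = Pi.single i 1 := by
    ext j
    simp [vecMul_transpose, mulVec, hy, Pi.single_apply]
  have hcoeff : of x' * (u • ∑ i, σ i • vecMulVec (x i) (y i) + v • vecMulVec p q) * (of y')ᵀ =
      diagonal (u • σ) + vecMulVec (v • of x' *ᵥ p) (of y' *ᵥ q) := by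
    rw [Matrix.mul_add, Matrix.add_mul, Matrix.mul_smul, Matrix.smul_mul,
      mul_sum_smul_vecMulVec_mul_eq_diagonal hL hN, Matrix.mul_smul, Matrix.smul_mul,
      mul_vecMulVec, vecMulVec_mul, vecMul_transpose, diagonal_smul, smul_vecMulVec]
  have huσ (i : ι) : IsUnit ((u • σ) i) := hu.mul (hσ i)
  have hdiag (i : ι) : (v • of x' *ᵥ p) i * (of y' *ᵥ q) i = 0 := by
    simp [mulVec, mul_assoc, hpq]
  apply card_le_rank_of_isUnit_det_mul_mul (L := of x') (N := (of y')ᵀ)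
  rw [hcoeff, det_diagonal_add_vecMulVec_of_mul_eq_zero huσ hdiag]
  exact IsUnit.prod_univ_iff.2 huσ

end Rank

theorem ProdState.rank_le_one {w : Fin 2 → Fin 2 → ℂ} (hw : ProdState w) : (of w).rank ≤ 1 := by
  obtain ⟨f, g, hfg⟩ := hw
  have hw_eq : of w = vecMulVec f g := ext hfg
  exact hw_eq ▸ rank_vecMulVec_le f g

theorem Entangled2.of_one_lt_rank {w : Fin 2 → Fin 2 → ℂ} (hw : 1 < (of w).rank) :
    Entangled2 w := by
  refine ⟨?_, fun hprod => hw.not_ge hprod.rank_le_one⟩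
  rintro rfl
  simp at hw

theorem ip2_tq_tq (x y f g : Fin 2 → ℂ) : ip2 (tq x y) (tq f g) = ip1 x f * ip1 y g := by
  simp only [ip2, ip1, tq, Fin.sum_univ_two, map_mul]
  ring

theorem star_ip1 (x y : Fin 2 → ℂ) : star (ip1 x y) = ip1 y x :=
  (star_dotProduct y x).symm

theorem ip1_vecCons_eq_ite {x₀ x₁ : Fin 2 → ℂ} (h₀ : ip1 x₀ x₀ = 1) (h₁ : ip1 x₁ x₁ = 1)
    (h : ip1 x₀ x₁ = 0) (i j : Fin 2) :
    ip1 (![x₀, x₁] i) (![x₀, x₁] j) = if i = j then 1 else 0 := by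
  have h' : ip1 x₁ x₀ = 0 := by rw [← star_ip1, h, star_zero]
  fin_cases i <;> fin_cases j <;> simp [h₀, h₁, h, h']

/-- Any nontrivial linear combination `u • Φ + v • Φ'` of a two-qubit entangled state
`Φ = s • u₀⊗w₀ + t • u₁⊗w₁` and a nonzero product state `Φ'` orthogonal to both
product terms of the Schmidt decomposition of `Φ` is entangled (here `u ≠ 0`). -/
theorem lin_comb_entangled
    (u₀ u₁ w₀ w₁ : Fin 2 → ℂ)
    (hu₀ : ip1 u₀ u₀ = 1) (hu₁ : ip1 u₁ u₁ = 1) (hu : ip1 u₀ u₁ = 0)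
    (hw₀ : ip1 w₀ w₀ = 1) (hw₁ : ip1 w₁ w₁ = 1) (hw : ip1 w₀ w₁ = 0)
    (s t : ℝ) (hs : s ≠ 0) (ht : t ≠ 0)
    (Φ' : Fin 2 → Fin 2 → ℂ) (hΦ'0 : Φ' ≠ 0) (hΦ'p : ProdState Φ')
    (ho0 : ip2 (tq u₀ w₀) Φ' = 0) (ho1 : ip2 (tq u₁ w₁) Φ' = 0) :
    ∀ u v : ℂ, u ≠ 0 →
      Entangled2 (u • ((s : ℂ) • tq u₀ w₀ + (t : ℂ) • tq u₁ w₁) + v • Φ') := by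
  intro u v hu_ne
  obtain ⟨p, q, hpq⟩ := hΦ'p
  obtain rfl : Φ' = tq p q := funext₂ hpq
  rw [ip2_tq_tq] at ho0 ho1
  have hσ : ∀ i, IsUnit (![(s : ℂ), (t : ℂ)] i) := by simp [Fin.forall_fin_two, hs, ht]
  have horth : ∀ i, ip1 (![u₀, u₁] i) p * ip1 (![w₀, w₁] i) q = 0 :=
    Fin.forall_fin_two.2 ⟨ho0, ho1⟩
  have hrank := lin_comb_entangled_general
    (x' := fun i => star (![u₀, u₁] i)) (y' := fun i => star (![w₀, w₁] i))
    (ip1_vecCons_eq_ite hu₀ hu₁ hu) (ip1_vecCons_eq_ite hw₀ hw₁ hw) hσ horth hu_ne.isUnit v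
  rw [Fin.sum_univ_two, Fintype.card_fin] at hrank
  exact .of_one_lt_rank hrank
end

section
/- Let α, α' : Fin 2 → ℂ be orthonormal, let Φ and Φ' be two-qubit entangled states with ⟨Φ, Φ'⟩ = 0, let c, d be nonzero real numbers with c² + d² = 1, and set Ψ = c • (α ⊗ Φ) + d • (α' ⊗ Φ'). Then for all β, γ : Fin 2 → ℂ and all nonzero complex numbers a, b, neither a • Ψ + b • (α ⊗ (β ⊗ γ)) nor a • Ψ + b • (α' ⊗ (β ⊗ γ)) is completely product. -/
/-! A linear functional on the first qubit sends a completely product state to a product state of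
the other two. As `α` and `α'` are linearly independent, some functional kills the one carried by
the added product state but not the other, so it sends the superposition to a nonzero multiple
of `Φ'` or of `Φ`, which is entangled. -/

theorem tqq_add (α : Fin 2 → ℂ) (w w' : Fin 2 → Fin 2 → ℂ) :
    tqq α (w + w') = tqq α w + tqq α w' := by
  ext i j k
  exact mul_add _ _ _

theorem tqq_smul (s : ℂ) (α : Fin 2 → ℂ) (w : Fin 2 → Fin 2 → ℂ) :
    tqq α (s • w) = s • tqq α w := by
  ext i j k
  exact mul_left_comm _ _ _

/-- Contraction of the first qubit of a three-qubit state with a linear functional `φ` (the partial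
inner product with `α` when `φ = ⟨α, ·⟩`); its values are two-qubit states. -/
def contractFst (φ : Module.Dual ℂ (Fin 2 → ℂ)) :
    (Fin 2 → Fin 2 → Fin 2 → ℂ) →ₗ[ℂ] Fin 2 → Fin 2 → ℂ where
  toFun v j k := φ fun i => v i j k
  map_add' u v := by ext j k; exact map_add φ (fun i => u i j k) fun i => v i j k
  map_smul' s v := by ext j k; exact map_smul φ s fun i => v i j k

theorem contractFst_tqq (φ : Module.Dual ℂ (Fin 2 → ℂ)) (α : Fin 2 → ℂ)
    (w : Fin 2 → Fin 2 → ℂ) : contractFst φ (tqq α w) = φ α • w := by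
  ext j k
  calc φ (fun i => α i * w j k) = φ (w j k • α) := by
        congr 1; ext i; exact mul_comm _ _
    _ = φ α * w j k := by rw [map_smul, smul_eq_mul, mul_comm]

theorem ProdState.smul {w : Fin 2 → Fin 2 → ℂ} (hw : ProdState w) (s : ℂ) :
    ProdState (s • w) := by
  obtain ⟨f, g, hfg⟩ := hw
  refine ⟨s • f, g, fun j k => ?_⟩
  simp only [Pi.smul_apply, smul_eq_mul, hfg, mul_assoc]

theorem prodState_smul_iff {s : ℂ} (hs : s ≠ 0) {w : Fin 2 → Fin 2 → ℂ} :
    ProdState (s • w) ↔ ProdState w :=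
  ⟨fun h => inv_smul_smul₀ hs w ▸ h.smul s⁻¹, fun h => h.smul s⟩

namespace CompProd3

theorem exists_eq_tqq_tq {v : Fin 2 → Fin 2 → Fin 2 → ℂ} (hv : CompProd3 v) :
    ∃ f g h : Fin 2 → ℂ, v = tqq f (tq g h) := by
  obtain ⟨f, g, h, hfgh⟩ := hv
  refine ⟨f, g, h, ?_⟩
  ext i j k
  exact (hfgh i j k).trans (mul_assoc _ _ _)

theorem prodState_contractFst {v : Fin 2 → Fin 2 → Fin 2 → ℂ} (hv : CompProd3 v)
    (φ : Module.Dual ℂ (Fin 2 → ℂ)) : ProdState (contractFst φ v) := by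
  obtain ⟨f, g, h, rfl⟩ := hv.exists_eq_tqq_tq
  rw [contractFst_tqq]
  exact ProdState.smul ⟨g, h, fun _ _ => rfl⟩ (φ f)

variable {α α' : Fin 2 → ℂ} {w w' : Fin 2 → Fin 2 → ℂ}

theorem prodState_left_of_linearIndependent (hα : LinearIndependent ℂ ![α, α'])
    (h : CompProd3 (tqq α w + tqq α' w')) : ProdState w := by
  have hspan : α ∉ ℂ ∙ α' := fun hmem =>
    have ⟨s, hs⟩ := Submodule.mem_span_singleton.mp hmem
    (linearIndependent_fin2.mp hα).2 s hs
  obtain ⟨φ, hφα, hφ⟩ := Submodule.exists_le_ker_of_notMem hspan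
  have hφα' : φ α' = 0 := hφ (Submodule.mem_span_singleton_self α')
  have hcontract : contractFst φ (tqq α w + tqq α' w') = φ α • w := by
    rw [map_add, contractFst_tqq, contractFst_tqq, hφα', zero_smul, add_zero]
  exact (prodState_smul_iff hφα).mp (hcontract ▸ h.prodState_contractFst φ)

theorem prodState_right_of_linearIndependent (hα : LinearIndependent ℂ ![α, α'])
    (h : CompProd3 (tqq α w + tqq α' w')) : ProdState w' :=
  prodState_left_of_linearIndependent (LinearIndependent.pair_symm_iff.mp hα)
    (add_comm (tqq α w) _ ▸ h)

end CompProd3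

theorem linearIndependent_pair_of_star_dotProduct_eq_zero {K n : Type*} [Field K] [PartialOrder K]
    [StarRing K] [StarOrderedRing K] [Fintype n] {u v : n → K} (hu : u ≠ 0) (hv : v ≠ 0)
    (huv : star u ⬝ᵥ v = 0) : LinearIndependent K ![u, v] := by
  refine (LinearIndependent.pair_iff' hu).mpr fun s hs => hv ?_
  have hsu : s * (star u ⬝ᵥ u) = 0 := by
    rw [← smul_eq_mul, ← dotProduct_smul, hs, huv]
  have hs₀ : s = 0 :=
    (mul_eq_zero.mp hsu).resolve_right (dotProduct_star_self_eq_zero.not.mpr hu)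
  rw [← hs, hs₀, zero_smul]

theorem ne_zero_of_ip1_self_eq_one {u : Fin 2 → ℂ} (hu : ip1 u u = 1) : u ≠ 0 := by
  rintro rfl
  simp [ip1] at hu

open scoped ComplexOrder in
theorem linearIndependent_pair_of_ip1_orthonormal {u v : Fin 2 → ℂ} (hu : ip1 u u = 1)
    (hv : ip1 v v = 1) (huv : ip1 u v = 0) : LinearIndependent ℂ ![u, v] :=
  linearIndependent_pair_of_star_dotProduct_eq_zero (ne_zero_of_ip1_self_eq_one hu)
    (ne_zero_of_ip1_self_eq_one hv) huv

theorem superposition_with_aligned_product_not_completely_product_general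
    {α α' : Fin 2 → ℂ} (hα : LinearIndependent ℂ ![α, α'])
    {Φ Φ' : Fin 2 → Fin 2 → ℂ} (hΦ : ¬ ProdState Φ) (hΦ' : ¬ ProdState Φ')
    {a c d : ℂ} (ha : a ≠ 0) (hc : c ≠ 0) (hd : d ≠ 0) (χ : Fin 2 → Fin 2 → ℂ) (b : ℂ) :
    ¬ CompProd3 (a • (c • tqq α Φ + d • tqq α' Φ') + b • tqq α χ) ∧
      ¬ CompProd3 (a • (c • tqq α Φ + d • tqq α' Φ') + b • tqq α' χ) := by
  refine ⟨fun h => ?_, fun h => ?_⟩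
  · have hsplit : a • (c • tqq α Φ + d • tqq α' Φ') + b • tqq α χ
        = tqq α ((a * c) • Φ + b • χ) + tqq α' ((a * d) • Φ') := by
      rw [tqq_add, tqq_smul, tqq_smul, tqq_smul]
      module
    rw [hsplit] at h
    exact hΦ' ((prodState_smul_iff (mul_ne_zero ha hd)).mp
      (h.prodState_right_of_linearIndependent hα))
  · have hsplit : a • (c • tqq α Φ + d • tqq α' Φ') + b • tqq α' χ
        = tqq α ((a * c) • Φ) + tqq α' ((a * d) • Φ' + b • χ) := by
      rw [tqq_add, tqq_smul, tqq_smul, tqq_smul]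
      module
    rw [hsplit] at h
    exact hΦ ((prodState_smul_iff (mul_ne_zero ha hc)).mp
      (h.prodState_left_of_linearIndependent hα))

/-- Cases (i) and (ii) of Proposition 3: if both `Φ` and `Φ'` are orthogonal two-qubit
entangled states and `Ψ = c • α ⊗ Φ + d • α' ⊗ Φ'`, then superposing `Ψ` with a
completely product state of the form `α ⊗ β ⊗ γ` or `α' ⊗ β ⊗ γ` never yields a
completely product state. -/
theorem superposition_with_aligned_product_not_completely_product
    (α α' : Fin 2 → ℂ)
    (hαn : ip1 α α = 1) (hα'n : ip1 α' α' = 1) (hαα' : ip1 α α' = 0)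
    (Φ Φ' : Fin 2 → Fin 2 → ℂ)
    (hΦ : Entangled2 Φ) (hΦ' : Entangled2 Φ') (hΦΦ' : ip2 Φ Φ' = 0)
    (c d : ℝ) (hc : c ≠ 0) (hd : d ≠ 0) (hcd : c ^ 2 + d ^ 2 = 1) :
    ∀ β γ : Fin 2 → ℂ, ∀ a b : ℂ, a ≠ 0 → b ≠ 0 →
      ¬ CompProd3 (a • ((c : ℂ) • tqq α Φ + (d : ℂ) • tqq α' Φ')
          + b • tqq α (tq β γ)) ∧
      ¬ CompProd3 (a • ((c : ℂ) • tqq α Φ + (d : ℂ) • tqq α' Φ')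
          + b • tqq α' (tq β γ)) := by
  intro β γ a b ha _
  exact superposition_with_aligned_product_not_completely_product_general
    (linearIndependent_pair_of_ip1_orthonormal hαn hα'n hαα') hΦ.2 hΦ'.2 ha
    (Complex.ofReal_ne_zero.mpr hc) (Complex.ofReal_ne_zero.mpr hd) (tq β γ) b
end

section
/- Let d ≥ 2 and let M : Fin 2 → Fin d → ℂ be the coefficient matrix of an entangled qubit–qudit pure state, i.e., M is nonzero and there exist no f : Fin 2 → ℂ, g : Fin d → ℂ with M i j = f i * g j for all i, j. Then there exist a nonzero product state P : Fin 2 → Fin d → ℂ (i.e., P i j = f i * g j for some f, g) and nonzero complex numbers a, b such that a • M + b • P is a nonzero product state. (Thus no state of ℂ² ⊗ ℂ^d is unconditionally superposition-robust, in sharp contrast with multipartite systems.) -/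
/-! A coefficient matrix with two rows is the sum of two product states, one carried by each basis
state of the qubit. If `P + Q` is entangled while `P` and `Q` are product states, then `P` and `Q`
are both nonzero, and subtracting `P` from `P + Q` leaves the product state `Q`. -/

/-- Being a product state, for a bipartite pure state given by its coefficients in a product basis.
The zero vector is included, and the coefficients need not commute: the factor indexed by the first
party stands on the left. -/
def IsProductState {ι κ R : Type*} [Mul R] (M : ι → κ → R) : Prop :=
  ∃ (f : ι → R) (g : κ → R), ∀ i j, M i j = f i * g j

theorem exists_isProductState_add_eq {κ R : Type*} [NonAssocSemiring R] (M : Fin 2 → κ → R) :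
    ∃ P Q : Fin 2 → κ → R, IsProductState P ∧ IsProductState Q ∧ P + Q = M := by
  refine ⟨fun i j => (![1, 0] : Fin 2 → R) i * M 0 j, fun i j => (![0, 1] : Fin 2 → R) i * M 1 j,
    ⟨_, _, fun _ _ => rfl⟩, ⟨_, _, fun _ _ => rfl⟩, ?_⟩
  ext i j
  fin_cases i <;> simp

theorem qubit_qudit_not_superposition_robust_general {ι κ R : Type*} [Ring R] {P Q : ι → κ → R}
    (hP : IsProductState P) (hQ : IsProductState Q) (hPQ : ¬ IsProductState (P + Q)) :
    ∃ (S : ι → κ → R) (a b : R), S ≠ 0 ∧ IsProductState S ∧ a ≠ 0 ∧ b ≠ 0 ∧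
      a • (P + Q) + b • S ≠ 0 ∧ IsProductState (a • (P + Q) + b • S) := by
  have hP0 : P ≠ 0 := by
    rintro rfl
    exact hPQ (by rwa [zero_add])
  have hQ0 : Q ≠ 0 := by
    rintro rfl
    exact hPQ (by rwa [add_zero])
  have : Nontrivial R :=
    not_subsingleton_iff_nontrivial.mp fun _ => hP0 (Subsingleton.elim P 0)
  have sub_eq : (1 : R) • (P + Q) + (-1 : R) • P = Q := by
    rw [one_smul, neg_one_smul, add_neg_eq_iff_eq_add, add_comm]
  refine ⟨P, 1, -1, hP0, hP, one_ne_zero, neg_ne_zero.mpr one_ne_zero, ?_, ?_⟩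
  · rwa [sub_eq]
  · rwa [sub_eq]

/-- No qubit–qudit entangled pure state is unconditionally superposition-robust:
for any entangled `M : Fin 2 → Fin d → ℂ` there are a nonzero product state `P` and
nonzero coefficients `a`, `b` such that `a • M + b • P` is a nonzero product state. -/
theorem qubit_qudit_not_superposition_robust
    (d : ℕ) (hd : 2 ≤ d) (M : Fin 2 → Fin d → ℂ) (hM0 : M ≠ 0)
    (hMent : ¬ ∃ (f : Fin 2 → ℂ) (g : Fin d → ℂ), ∀ i j, M i j = f i * g j) :
    ∃ (P : Fin 2 → Fin d → ℂ) (a b : ℂ),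
      P ≠ 0 ∧ (∃ (f : Fin 2 → ℂ) (g : Fin d → ℂ), ∀ i j, P i j = f i * g j) ∧
      a ≠ 0 ∧ b ≠ 0 ∧ a • M + b • P ≠ 0 ∧
      (∃ (f : Fin 2 → ℂ) (g : Fin d → ℂ), ∀ i j, (a • M + b • P) i j = f i * g j) := by
  obtain ⟨P, Q, hP, hQ, rfl⟩ := exists_isProductState_add_eq M
  exact qubit_qudit_not_superposition_robust_general hP hQ hMent
end

section
/- There exist orthonormal vectors α, α' : Fin 2 → ℂ, a two-qubit entangled state Φ, a nonzero two-qubit product state Φ' with ⟨Φ, Φ'⟩ = 0, nonzero real numbers c, d with c² + d² = 1, a two-qubit entangled state χ which is not a scalar multiple of Φ, and nonzero complex numbers a, b, such that a • (c • (α ⊗ Φ) + d • (α' ⊗ Φ')) + b • (α ⊗ χ) is completely product. (Thus superposition with a bi-separable state whose entangled factor differs from Φ can still yield a completely product state.) -/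
/-!
If `a * c • Φ + b • χ = s • Φ'`, the superposition collapses to `(s • α + a * d • α') ⊗ Φ'`,
which is completely product because `Φ'` is. So it suffices to choose `s ≠ 0` for which the
solution `χ` of this equation is entangled. A two-qubit state is entangled iff its determinant
is nonzero, and the determinant is a quadratic form on `2 × 2` matrices that vanishes at `Φ'`,
so by the parallelogram law one of `s = 1` and `s = -1` works. This `χ` is not a multiple of
`Φ`, for otherwise the equation would make `Φ'` a nonzero multiple of the entangled state `Φ`.
-/

theorem det_add_add_det_sub_fin_two {R : Type*} [CommRing R] (A B : Matrix (Fin 2) (Fin 2) R) :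
    (A + B).det + (A - B).det = 2 * (A.det + B.det) := by
  simp only [Matrix.det_fin_two, Matrix.add_apply, Matrix.sub_apply]
  ring

theorem mul_eq_mul_of_det_fin_two_eq_zero {R : Type*} [CommRing R] {A : Matrix (Fin 2) (Fin 2) R}
    (hA : A.det = 0) (i j k l : Fin 2) : A i j * A k l = A i l * A k j := by
  rw [Matrix.det_fin_two] at hA
  fin_cases i <;> fin_cases j <;> fin_cases k <;> fin_cases l <;> grind

theorem prodState_zero : ProdState 0 :=
  ⟨0, 0, by simp⟩

theorem prodState_iff_det_eq_zero {w : Fin 2 → Fin 2 → ℂ} :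
    ProdState w ↔ (Matrix.of w).det = 0 := by
  constructor
  · rintro ⟨f, g, hw⟩
    have hrank : Matrix.of w = Matrix.vecMulVec f g := Matrix.ext hw
    rw [hrank, Matrix.det_vecMulVec]
  · intro hdet
    by_cases hw : w = 0
    · exact hw ▸ prodState_zero
    obtain ⟨p, hp⟩ := Function.ne_iff.mp hw
    obtain ⟨q, hpq : w p q ≠ 0⟩ := Function.ne_iff.mp hp
    refine ⟨fun j => w j q, fun k => w p k / w p q, fun j k => ?_⟩
    rw [← mul_div_assoc, eq_div_iff hpq]
    exact mul_eq_mul_of_det_fin_two_eq_zero hdet j k p q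

theorem entangled2_iff_det_ne_zero {w : Fin 2 → Fin 2 → ℂ} :
    Entangled2 w ↔ (Matrix.of w).det ≠ 0 := by
  rw [Ne, ← prodState_iff_det_eq_zero]
  exact ⟨And.right, fun hw => ⟨fun h0 => hw (h0 ▸ prodState_zero), hw⟩⟩

theorem Entangled2.smul {w : Fin 2 → Fin 2 → ℂ} (hw : Entangled2 w) {z : ℂ} (hz : z ≠ 0) :
    Entangled2 (z • w) := by
  rw [entangled2_iff_det_ne_zero] at hw ⊢
  rw [← Matrix.smul_of, Matrix.det_smul]
  exact mul_ne_zero (pow_ne_zero _ hz) hw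

theorem Entangled2.add_or_sub {w p : Fin 2 → Fin 2 → ℂ} (hw : Entangled2 w) (hp : ProdState p) :
    Entangled2 (w + p) ∨ Entangled2 (w - p) := by
  simp only [entangled2_iff_det_ne_zero, prodState_iff_det_eq_zero] at hw hp ⊢
  by_contra! ⟨hadd, hsub⟩
  have hlaw := det_add_add_det_sub_fin_two (Matrix.of w) (Matrix.of p)
  rw [Matrix.of_add_of, Matrix.of_sub_of, hadd, hsub, hp] at hlaw
  exact hw (by linear_combination -hlaw / 2)

theorem Entangled2.exists_smul_add_smul {w p : Fin 2 → Fin 2 → ℂ} (hw : Entangled2 w)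
    (hp : ProdState p) {t : ℂ} (ht : t ≠ 0) :
    ∃ s : ℂ, s ≠ 0 ∧ Entangled2 (t • w + s • p) := by
  rcases (hw.smul ht).add_or_sub hp with h | h
  · exact ⟨1, one_ne_zero, by rwa [one_smul]⟩
  · exact ⟨-1, neg_ne_zero.mpr one_ne_zero, by rwa [neg_one_smul, ← sub_eq_add_neg]⟩

theorem Entangled2.ne_smul_of_prodState {w p : Fin 2 → Fin 2 → ℂ} (hw : Entangled2 w)
    (hp : ProdState p) (hp0 : p ≠ 0) (z : ℂ) : p ≠ z • w := by
  rintro rfl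
  exact (hw.smul (smul_ne_zero_iff.mp hp0).1).2 hp

theorem ProdState.compProd3_tqq_s13 {w : Fin 2 → Fin 2 → ℂ} (hw : ProdState w) (β : Fin 2 → ℂ) :
    CompProd3 (tqq β w) := by
  obtain ⟨f, g, hw⟩ := hw
  exact ⟨β, f, g, fun i j k => by rw [tqq, hw, mul_assoc]⟩

theorem superposition_eq_tqq (α α' : Fin 2 → ℂ) {Φ Φ' χ : Fin 2 → Fin 2 → ℂ} {a b c s : ℂ} (d : ℂ)
    (hχ : (a * c) • Φ + b • χ = s • Φ') :
    a • (c • tqq α Φ + d • tqq α' Φ') + b • tqq α χ = tqq (s • α + (a * d) • α') Φ' := by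
  ext i j k
  have hjk : a * c * Φ j k + b * χ j k = s * Φ' j k := congrFun₂ hχ j k
  simp only [tqq, Pi.add_apply, Pi.smul_apply, smul_eq_mul]
  linear_combination α i * hjk

theorem exists_biseparable_superposition_completely_product_general (α α' : Fin 2 → ℂ)
    {Φ Φ' : Fin 2 → Fin 2 → ℂ} (hΦ : Entangled2 Φ) (hΦ' : ProdState Φ') (hΦ'0 : Φ' ≠ 0)
    {a b c : ℂ} (ha : a ≠ 0) (hb : b ≠ 0) (hc : c ≠ 0) (d : ℂ) :
    ∃ χ : Fin 2 → Fin 2 → ℂ, Entangled2 χ ∧ (¬ ∃ z : ℂ, χ = z • Φ) ∧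
      CompProd3 (a • (c • tqq α Φ + d • tqq α' Φ') + b • tqq α χ) := by
  obtain ⟨s, hs, hent⟩ := hΦ.exists_smul_add_smul hΦ' (neg_ne_zero.mpr (mul_ne_zero ha hc))
  set χ := b⁻¹ • (-(a * c) • Φ + s • Φ')
  have hχ : (a * c) • Φ + b • χ = s • Φ' := by
    rw [smul_inv_smul₀ hb, neg_smul, add_neg_cancel_left]
  refine ⟨χ, hent.smul (inv_ne_zero hb), ?_, ?_⟩
  · rintro ⟨z, hz⟩
    refine hΦ.ne_smul_of_prodState hΦ' hΦ'0 (s⁻¹ * (a * c + b * z)) ?_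
    rw [mul_smul, eq_inv_smul_iff₀ hs, ← hχ, hz, smul_smul, add_smul]
  · rw [superposition_eq_tqq α α' d hχ]
    exact hΦ'.compProd3_tqq_s13 _

theorem ip1_single_one (i j : Fin 2) :
    ip1 (Pi.single i 1) (Pi.single j 1) = if i = j then 1 else 0 := by
  simp [ip1, Pi.single_apply, eq_comm]

/-- Proposition 4: there exist a Schmidt-form three-qubit state `Ψ` (with `Φ`
entangled and `Φ'` a nonzero product state orthogonal to `Φ`) and a bi-separable
state `α ⊗ χ`, with `χ` entangled and not proportional to `Φ`, whose nontrivial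
superposition with `Ψ` is completely product. -/
theorem exists_biseparable_superposition_completely_product :
    ∃ (α α' : Fin 2 → ℂ) (Φ Φ' χ : Fin 2 → Fin 2 → ℂ) (c d : ℝ) (a b : ℂ),
      ip1 α α = 1 ∧ ip1 α' α' = 1 ∧ ip1 α α' = 0 ∧
      Entangled2 Φ ∧ Φ' ≠ 0 ∧ ProdState Φ' ∧ ip2 Φ Φ' = 0 ∧
      c ≠ 0 ∧ d ≠ 0 ∧ c ^ 2 + d ^ 2 = 1 ∧
      Entangled2 χ ∧ (¬ ∃ z : ℂ, χ = z • Φ) ∧ a ≠ 0 ∧ b ≠ 0 ∧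
      CompProd3 (a • ((c : ℂ) • tqq α Φ + (d : ℂ) • tqq α' Φ') + b • tqq α χ) := by
  let e (i : Fin 2) : Fin 2 → ℂ := Pi.single i 1
  have hΦ : Entangled2 (tq (e 0) (e 1) + tq (e 1) (e 0)) := by
    simp [entangled2_iff_det_ne_zero, Matrix.det_fin_two, tq, e]
  have hΦ'0 : tq (e 0) (e 0) ≠ 0 := fun h => by simpa [tq, e] using congrFun₂ h 0 0
  have horth : ip2 (tq (e 0) (e 1) + tq (e 1) (e 0)) (tq (e 0) (e 0)) = 0 := by
    simp [ip2, tq, e]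
  obtain ⟨χ, hχ, hχΦ, hprod⟩ := exists_biseparable_superposition_completely_product_general
    (e 0) (e 1) hΦ (prodState_tq _ _) hΦ'0 one_ne_zero one_ne_zero
    (c := (3 / 5 : ℝ)) (by norm_num) (4 / 5 : ℝ)
  exact ⟨e 0, e 1, _, _, χ, 3 / 5, 4 / 5, 1, 1, ip1_single_one 0 0, ip1_single_one 1 1,
    ip1_single_one 0 1, hΦ, hΦ'0, prodState_tq _ _, horth, by norm_num, by norm_num, by norm_num,
    hχ, hχΦ, one_ne_zero, one_ne_zero, hprod⟩
end

section
/- Let ω = exp(2πi/3) and let ψ₁,…,ψ₆ be the six three-qubit W-UEB states: ψ₁ = (1/√3)(|001⟩+|010⟩+|100⟩), ψ₂ = (1/√3)(|001⟩+ω|010⟩+ω²|100⟩), ψ₃ = (1/√3)(|001⟩+ω²|010⟩+ω|100⟩), ψ₄ = (1/√3)(|000⟩+|101⟩+|110⟩), ψ₅ = (1/√3)(|000⟩+ω|101⟩+ω²|110⟩), ψ₆ = (1/√3)(|000⟩+ω²|101⟩+ω|110⟩). Then for every m ∈ {1,…,6}, there is no completely product three-qubit state v such that ⟨ψₙ, v⟩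 = 0 for all n ≠ m and ⟨ψₘ, v⟩ ≠ 0. (This is the necessary and sufficient condition for unambiguous local identification of ψₘ with nonzero probability; hence no state of the W-UEB is locally unambiguously identifiable.) -/
/-- The standard basis ket `|i j k⟩` of the three-qubit space. -/
def ket (i j k : Fin 2) : Fin 2 → Fin 2 → Fin 2 → ℂ :=
  fun i' j' k' => if i' = i ∧ j' = j ∧ k' = k then 1 else 0

/-- The cube root of unity `ω = exp(2πi/3)`. -/
noncomputable def ω : ℂ := Complex.exp (2 * Real.pi * Complex.I / 3)

/-- The six states of the three-qubit W-type unextendible entangled basis. -/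
noncomputable def ψW : Fin 6 → (Fin 2 → Fin 2 → Fin 2 → ℂ) :=
  ![((Real.sqrt 3 : ℂ))⁻¹ • (ket 0 0 1 + ket 0 1 0 + ket 1 0 0),
    ((Real.sqrt 3 : ℂ))⁻¹ • (ket 0 0 1 + ω • ket 0 1 0 + ω ^ 2 • ket 1 0 0),
    ((Real.sqrt 3 : ℂ))⁻¹ • (ket 0 0 1 + ω ^ 2 • ket 0 1 0 + ω • ket 1 0 0),
    ((Real.sqrt 3 : ℂ))⁻¹ • (ket 0 0 0 + ket 1 0 1 + ket 1 1 0),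
    ((Real.sqrt 3 : ℂ))⁻¹ • (ket 0 0 0 + ω • ket 1 0 1 + ω ^ 2 • ket 1 1 0),
    ((Real.sqrt 3 : ℂ))⁻¹ • (ket 0 0 0 + ω ^ 2 • ket 1 0 1 + ω • ket 1 1 0)]

/-!
Up to the factor `1/√3`, the overlaps of a state `v` with `ψ₁, ψ₂, ψ₃` are the discrete Fourier
coefficients on `ℤ/3` of the triple of its coefficients at `|001⟩, |010⟩, |100⟩`, and those with
`ψ₄, ψ₅, ψ₆` come in the same way from `|000⟩, |101⟩, |110⟩`. If `v` is orthogonal to every `ψₙ`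
except possibly `ψₘ`, then the triple not belonging to `m` vanishes and the triple belonging to `m`
is a multiple of a character. When `v` is a product across some bipartition, a vanishing `2 × 2`
minor equates a product of two coefficients in one triple with a product of two coefficients in the
other, so the triple of `m` has a zero coefficient; characters have none, so that triple vanishes
as well.
-/

theorem eq_zero_of_dft_eq_zero_of_ne {N : ℕ} [NeZero N] {E : Type*} [AddCommGroup E] [Module ℂ E]
    {Φ : ZMod N → E} {k j : ZMod N} (hk : ∀ l, l ≠ k → ZMod.dft Φ l = 0) (hj : Φ j = 0) :
    Φ = 0 := by
  have inversion : Φ j = (N : ℂ)⁻¹ • ZMod.stdAddChar (k * j) • ZMod.dft Φ k := by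
    rw [← ZMod.dft.symm_apply_apply Φ, ZMod.invDFT_apply, ZMod.dft.apply_symm_apply,
      Fintype.sum_eq_single k fun l hl ↦ by rw [hk l hl, smul_zero]]
  have hN : (N : ℂ)⁻¹ ≠ 0 := inv_ne_zero (NeZero.ne _)
  have hχ : (ZMod.stdAddChar (k * j) : ℂ) ≠ 0 := (ZMod.stdAddChar.val_isUnit (k * j)).ne_zero
  have hΦk : ZMod.dft Φ k = 0 := by
    rwa [hj, eq_comm, smul_eq_zero_iff_right hN, smul_eq_zero_iff_right hχ] at inversion
  refine ZMod.dft.map_eq_zero_iff.mp (funext fun l ↦ ?_)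
  obtain rfl | hl := eq_or_ne l k
  exacts [hΦk, hk l hl]

/-- A three-qubit state is biseparable if its coefficient tensor factorizes across at least one of
the bipartitions `A|BC`, `B|AC`, `C|AB`. -/
def Biseparable3 (v : Fin 2 → Fin 2 → Fin 2 → ℂ) : Prop :=
  ∃ (f : Fin 2 → ℂ) (u : Fin 2 → Fin 2 → ℂ),
    (∀ i j k, v i j k = f i * u j k) ∨ (∀ i j k, v i j k = f j * u i k) ∨
      ∀ i j k, v i j k = f k * u i j

theorem CompProd3.biseparable3 {v : Fin 2 → Fin 2 → Fin 2 → ℂ} (hv : CompProd3 v) :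
    Biseparable3 v := by
  obtain ⟨f, g, h, hv⟩ := hv
  exact ⟨f, fun j k ↦ g j * h k, Or.inl fun i j k ↦ by rw [hv, mul_assoc]⟩

theorem ip3_ket (i j k : Fin 2) (v : Fin 2 → Fin 2 → Fin 2 → ℂ) : ip3 (ket i j k) v = v i j k := by
  fin_cases i <;> fin_cases j <;> fin_cases k <;> simp [ip3, ket]

theorem ip3_smul_left (c : ℂ) (u v : Fin 2 → Fin 2 → Fin 2 → ℂ) :
    ip3 (c • u) v = (starRingEnd ℂ) c * ip3 u v := by
  simp only [ip3, Pi.smul_apply, smul_eq_mul, map_mul, mul_assoc, Finset.mul_sum]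

theorem ip3_sum_left {ι : Type*} (s : Finset ι) (u : ι → Fin 2 → Fin 2 → Fin 2 → ℂ)
    (v : Fin 2 → Fin 2 → Fin 2 → ℂ) : ip3 (∑ i ∈ s, u i) v = ∑ i ∈ s, ip3 (u i) v := by
  simp only [ip3, Fin.sum_univ_two, Finset.sum_apply, map_sum, Finset.sum_mul,
    Finset.sum_add_distrib]

/-- The kets supporting the first (`b = 0`) or the last (`b = 1`) three W-UEB states, ordered so
that the `j`-th one carries the coefficient `ω ^ (j * k)` in the `k`-th state of the block. -/
def wKet : Fin 2 → ZMod 3 → Fin 2 → Fin 2 → Fin 2 → ℂ :=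
  ![![ket 0 0 1, ket 0 1 0, ket 1 0 0], ![ket 0 0 0, ket 1 0 1, ket 1 1 0]]

/-- The labelling of the W-UEB states by a block `b` and a frequency `k`: the pair `(b, k)` stands
for the index `k + 3 * b`. -/
def wIndex : Fin 2 × ZMod 3 ≃ Fin 6 :=
  finProdFinEquiv (n := 3)

theorem stdAddChar_one_eq_ω : ZMod.stdAddChar (1 : ZMod 3) = ω := by
  simpa [ω] using ZMod.stdAddChar_coe (N := 3) 1

theorem stdAddChar_eq_ω_pow (a : ZMod 3) : ZMod.stdAddChar a = ω ^ a.val := by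
  rw [← stdAddChar_one_eq_ω, ← AddChar.map_nsmul_eq_pow, nsmul_one, ZMod.natCast_zmod_val]

theorem sum_univ_zmod_three {M : Type*} [AddCommMonoid M] (f : ZMod 3 → M) :
    ∑ j, f j = f 0 + f 1 + f 2 :=
  Fin.sum_univ_three f

theorem ψW_wIndex (b : Fin 2) (k : ZMod 3) :
    ψW (wIndex (b, k)) =
      (Real.sqrt 3 : ℂ)⁻¹ • ∑ j, (ZMod.stdAddChar (j * k) : ℂ) • wKet b j := by
  have ψW_eq : ψW =
      ![(Real.sqrt 3 : ℂ)⁻¹ • (ket 0 0 1 + ω ^ 0 • ket 0 1 0 + ω ^ 0 • ket 1 0 0),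
        (Real.sqrt 3 : ℂ)⁻¹ • (ket 0 0 1 + ω ^ 1 • ket 0 1 0 + ω ^ 2 • ket 1 0 0),
        (Real.sqrt 3 : ℂ)⁻¹ • (ket 0 0 1 + ω ^ 2 • ket 0 1 0 + ω ^ 1 • ket 1 0 0),
        (Real.sqrt 3 : ℂ)⁻¹ • (ket 0 0 0 + ω ^ 0 • ket 1 0 1 + ω ^ 0 • ket 1 1 0),
        (Real.sqrt 3 : ℂ)⁻¹ • (ket 0 0 0 + ω ^ 1 • ket 1 0 1 + ω ^ 2 • ket 1 1 0),
        (Real.sqrt 3 : ℂ)⁻¹ • (ket 0 0 0 + ω ^ 2 • ket 1 0 1 + ω ^ 1 • ket 1 1 0)] := by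
    simp only [ψW, pow_zero, pow_one, one_smul]
  rw [sum_univ_zmod_three, zero_mul, one_mul, AddChar.map_zero_eq_one, one_smul,
    stdAddChar_eq_ω_pow, stdAddChar_eq_ω_pow, ψW_eq]
  fin_cases b <;> fin_cases k <;> rfl

/-- The coefficients of `v` at the kets of block `b`. -/
noncomputable def wBlock (v : Fin 2 → Fin 2 → Fin 2 → ℂ) (b : Fin 2) (j : ZMod 3) : ℂ :=
  ip3 (wKet b j) v

theorem Biseparable3.exists_forall_wBlock_mul_eq {v : Fin 2 → Fin 2 → Fin 2 → ℂ}
    (hv : Biseparable3 v) : ∃ p : ℂ, ∀ b, ∃ i j, wBlock v b i * wBlock v b j = p := by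
  obtain ⟨f, u, hv | hv | hv⟩ := hv
  · have minor : ip3 (ket 0 0 0) v * ip3 (ket 1 0 1) v = ip3 (ket 0 0 1) v * ip3 (ket 1 0 0) v := by
      simp only [ip3_ket, hv]; ring
    exact ⟨_, Fin.forall_fin_two.mpr ⟨⟨0, 2, rfl⟩, ⟨0, 1, minor⟩⟩⟩
  · have minor : ip3 (ket 0 0 0) v * ip3 (ket 1 1 0) v = ip3 (ket 0 1 0) v * ip3 (ket 1 0 0) v := by
      simp only [ip3_ket, hv]; ring
    exact ⟨_, Fin.forall_fin_two.mpr ⟨⟨1, 2, rfl⟩, ⟨0, 2, minor⟩⟩⟩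
  · have minor : ip3 (ket 0 0 0) v * ip3 (ket 1 0 1) v = ip3 (ket 0 0 1) v * ip3 (ket 1 0 0) v := by
      simp only [ip3_ket, hv]; ring
    exact ⟨_, Fin.forall_fin_two.mpr ⟨⟨0, 2, rfl⟩, ⟨0, 1, minor⟩⟩⟩

theorem Biseparable3.exists_wBlock_eq_zero {v : Fin 2 → Fin 2 → Fin 2 → ℂ} (hv : Biseparable3 v)
    {c : Fin 2} (hc : wBlock v c = 0) (b : Fin 2) : ∃ j, wBlock v b j = 0 := by
  obtain ⟨p, hp⟩ := hv.exists_forall_wBlock_mul_eq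
  obtain ⟨k, l, hkl⟩ := hp c
  obtain ⟨i, j, hij⟩ := hp b
  rw [← hkl, hc, Pi.zero_apply, zero_mul, mul_eq_zero] at hij
  exact hij.elim (⟨i, ·⟩) (⟨j, ·⟩)

theorem ip3_ψW (v : Fin 2 → Fin 2 → Fin 2 → ℂ) (b : Fin 2) (k : ZMod 3) :
    ip3 (ψW (wIndex (b, k))) v = (Real.sqrt 3 : ℂ)⁻¹ * ZMod.dft (wBlock v b) k := by
  simp only [ψW_wIndex, ip3_smul_left, ip3_sum_left, ZMod.dft_apply, AddChar.map_neg_eq_conj,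
    map_inv₀, Complex.conj_ofReal, smul_eq_mul, wBlock]

theorem ip3_ψW_eq_zero_iff {v : Fin 2 → Fin 2 → Fin 2 → ℂ} {b : Fin 2} {k : ZMod 3} :
    ip3 (ψW (wIndex (b, k))) v = 0 ↔ ZMod.dft (wBlock v b) k = 0 := by
  simp [ip3_ψW]

theorem wUEB_not_locally_unambiguously_identifiable_general (m : Fin 6) :
    ¬ ∃ v : Fin 2 → Fin 2 → Fin 2 → ℂ, Biseparable3 v ∧
      (∀ n : Fin 6, n ≠ m → ip3 (ψW n) v = 0) ∧ ip3 (ψW m) v ≠ 0 := by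
  rintro ⟨v, hv, orthogonal, overlap⟩
  obtain ⟨⟨b, k⟩, rfl⟩ := wIndex.surjective m
  have dft_eq_zero {c : Fin 2} {l : ZMod 3} (h : (c, l) ≠ (b, k)) : ZMod.dft (wBlock v c) l = 0 :=
    ip3_ψW_eq_zero_iff.mp (orthogonal _ (wIndex.injective.ne h))
  obtain ⟨c, hcb⟩ := exists_ne b
  have other_block : wBlock v c = 0 :=
    ZMod.dft.map_eq_zero_iff.mp (funext fun l ↦ dft_eq_zero (by simp [hcb]))
  obtain ⟨j, hj⟩ := hv.exists_wBlock_eq_zero other_block b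
  have own_block : wBlock v b = 0 :=
    eq_zero_of_dft_eq_zero_of_ne (k := k) (fun l hl ↦ dft_eq_zero (by simpa using hl)) hj
  exact overlap (ip3_ψW_eq_zero_iff.mpr (by rw [own_block, map_zero, Pi.zero_apply]))

/-- Theorem 2 for the W-UEB: no state of the W-UEB is locally unambiguously
identifiable, i.e. for each `m` there is no completely product state orthogonal to
all the other W-UEB states but not orthogonal to `ψW m`. -/
theorem wUEB_not_locally_unambiguously_identifiable :
    ∀ m : Fin 6,
      ¬ ∃ v : Fin 2 → Fin 2 → Fin 2 → ℂ, CompProd3 v ∧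
        (∀ n : Fin 6, n ≠ m → ip3 (ψW n) v = 0) ∧ ip3 (ψW m) v ≠ 0 := by
  rintro m ⟨v, hv, h⟩
  exact wUEB_not_locally_unambiguously_identifiable_general m ⟨v, hv.biseparable3, h⟩
end

section
/- Let ω = exp(2πi/3) and let ψ₁,…,ψ₆ be the six three-qubit W-UEB states: ψ₁ = (1/√3)(|001⟩+|010⟩+|100⟩), ψ₂ = (1/√3)(|001⟩+ω|010⟩+ω²|100⟩), ψ₃ = (1/√3)(|001⟩+ω²|010⟩+ω|100⟩), ψ₄ = (1/√3)(|000⟩+|101⟩+|110⟩), ψ₅ = (1/√3)(|000⟩+ω|101⟩+ω²|110⟩), ψ₆ = (1/√3)(|000⟩+ω²|101⟩+ω|110⟩). Then every three-qubit state v satisfying ⟨ψₘ, v⟩ = 0 for all m ∈ {1,…,6} is completely product; that is, the six entangled states form an unextendible entangled basis whose orthogonal complement (spanned by |011⟩ and |111⟩) contains only completely product states. -/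
/-!
Up to normalization, each of the triples `ψ₁, ψ₂, ψ₃` and `ψ₄, ψ₅, ψ₆` is the discrete Fourier
transform of three basis kets. Since the Vandermonde matrix of the powers of a primitive cube root
of unity is invertible, a state orthogonal to such a triple is orthogonal to its three kets. Only
`|011⟩` and `|111⟩` are then left, and `a|011⟩ + b|111⟩ = (a|0⟩ + b|1⟩) ⊗ |1⟩ ⊗ |1⟩`.
-/

/-- The discrete Fourier transform of the family `u`, with `ζ` in the role of the root of unity
and without normalization. -/
def fourierFamily {R V : Type*} [CommSemiring R] [AddCommMonoid V] [Module R V] {n : ℕ}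
    (ζ : R) (u : Fin n → V) (j : Fin n) : V :=
  ∑ i : Fin n, ζ ^ (j.val * i.val) • u i

theorem forall_map_fourierFamily_eq_zero_iff {R S V : Type*} [CommSemiring R] [CommRing S]
    [IsDomain S] [AddCommMonoid V] [Module R V] {σ : R →+* S} {n : ℕ} {ζ : R}
    (hζ : IsPrimitiveRoot (σ ζ) n) (φ : V →ₛₗ[σ] S) (u : Fin n → V) :
    (∀ j, φ (fourierFamily ζ u j) = 0) ↔ ∀ i, φ (u i) = 0 := by
  have map_fourierFamily (j : Fin n) :
      φ (fourierFamily ζ u j) = ∑ i : Fin n, (σ ζ ^ j.val) ^ i.val * φ (u i) := by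
    simp only [fourierFamily, map_sum, map_smulₛₗ, map_pow, pow_mul, smul_eq_mul]
  have nodes_injective : Function.Injective fun j : Fin n => σ ζ ^ j.val :=
    fun i j hij => Fin.ext (hζ.pow_inj i.isLt j.isLt hij)
  simp only [map_fourierFamily]
  constructor
  · intro h
    exact congrFun (Matrix.eq_zero_of_forall_index_sum_pow_mul_eq_zero nodes_injective h)
  · intro h j
    simp only [h, mul_zero, Finset.sum_const_zero]

theorem isPrimitiveRoot_ω : IsPrimitiveRoot ω 3 := by
  simpa only [ω, Nat.cast_ofNat] using Complex.isPrimitiveRoot_exp 3 three_ne_zero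

section ThreeQubit

variable (v : Fin 2 → Fin 2 → Fin 2 → ℂ)

/-- The functional `u ↦ ⟨u, v⟩`, bundled as a conjugate-linear map. -/
noncomputable def ip3Left : (Fin 2 → Fin 2 → Fin 2 → ℂ) →ₛₗ[starRingEnd ℂ] ℂ where
  toFun u := ip3 u v
  map_add' u₁ u₂ := by
    simp only [ip3, Pi.add_apply, map_add, add_mul, Finset.sum_add_distrib]
  map_smul' c u := by
    simp only [ip3, Pi.smul_apply, smul_eq_mul, map_mul, mul_assoc, Finset.mul_sum]

theorem ip3_smul_left_eq_zero_iff {c : ℂ} (hc : c ≠ 0) (u : Fin 2 → Fin 2 → Fin 2 → ℂ) :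
    ip3 (c • u) v = 0 ↔ ip3 u v = 0 := by
  have ip3_smul : ip3 (c • u) v = starRingEnd ℂ c * ip3 u v := (ip3Left v).map_smulₛₗ c u
  rw [ip3_smul, mul_eq_zero, map_eq_zero, or_iff_right hc]

theorem ip3_ket_left (i j k : Fin 2) : ip3 (ket i j k) v = v i j k := by
  simp [ip3, ket, ite_and, apply_ite (starRingEnd ℂ), -Fin.sum_univ_two]

/-- The two triples of basis kets supporting the W-UEB: the kets with a single excitation, for
`ψ₁, ψ₂, ψ₃`, and their images under flipping the first qubit, for `ψ₄, ψ₅, ψ₆`. Each triple is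
listed in the order in which `ψ₂` or `ψ₅` gives its kets the phases `1, ω, ω²`. -/
def wKets : Fin 2 → Fin 3 → (Fin 2 → Fin 2 → Fin 2 → ℂ) :=
  ![![ket 0 0 1, ket 0 1 0, ket 1 0 0], ![ket 0 0 0, ket 1 0 1, ket 1 1 0]]

theorem ψW_finProdFinEquiv (a : Fin 2) (j : Fin 3) :
    ψW (finProdFinEquiv (a, j)) = (Real.sqrt 3 : ℂ)⁻¹ • fourierFamily ω (wKets a) j := by
  have ω_pow_four : ω ^ 4 = ω := by
    rw [pow_succ, isPrimitiveRoot_ω.pow_eq_one, one_mul]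
  fin_cases a <;> fin_cases j <;>
    simp [ψW, wKets, fourierFamily, Fin.sum_univ_three, finProdFinEquiv, ω_pow_four]

theorem forall_ip3_ψW_eq_zero_iff_wKets :
    (∀ m, ip3 (ψW m) v = 0) ↔ ∀ a i, ip3 (wKets a i) v = 0 := by
  have normalization_ne_zero : (Real.sqrt 3 : ℂ)⁻¹ ≠ 0 := by simp
  have isPrimitiveRoot_conj_ω : IsPrimitiveRoot (starRingEnd ℂ ω) 3 :=
    isPrimitiveRoot_ω.map_of_injective (starRingEnd ℂ).injective
  calc (∀ m, ip3 (ψW m) v = 0)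
      ↔ ∀ p : Fin 2 × Fin 3, ip3 (ψW (finProdFinEquiv p)) v = 0 :=
        (finProdFinEquiv (m := 2) (n := 3)).forall_congr_right.symm
    _ ↔ ∀ a j, ip3 (fourierFamily ω (wKets a) j) v = 0 := by
        simp only [Prod.forall, ψW_finProdFinEquiv,
          ip3_smul_left_eq_zero_iff v normalization_ne_zero]
    _ ↔ ∀ a i, ip3 (wKets a i) v = 0 :=
        forall_congr' fun a =>
          forall_map_fourierFamily_eq_zero_iff isPrimitiveRoot_conj_ω (ip3Left v) (wKets a)

theorem forall_ip3_wKets_eq_zero_iff_mem_span :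
    (∀ a i, ip3 (wKets a i) v = 0) ↔ v ∈ Submodule.span ℂ {ket 0 1 1, ket 1 1 1} := by
  have coeff_iff : (∀ a i, ip3 (wKets a i) v = 0) ↔
      (v 0 0 1 = 0 ∧ v 0 1 0 = 0 ∧ v 1 0 0 = 0) ∧
        v 0 0 0 = 0 ∧ v 1 0 1 = 0 ∧ v 1 1 0 = 0 := by
    simp [wKets, ip3_ket_left, Fin.forall_fin_succ]
  rw [coeff_iff, Submodule.mem_span_pair]
  constructor
  · rintro ⟨⟨h001, h010, h100⟩, h000, h101, h110⟩
    refine ⟨v 0 1 1, v 1 1 1, ?_⟩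
    ext i j k
    fin_cases i <;> fin_cases j <;> fin_cases k <;>
      simp [ket, h001, h010, h100, h000, h101, h110]
  · rintro ⟨a, b, rfl⟩
    simp [ket]

variable {v} in
theorem compProd3_of_mem_span_ket {j k : Fin 2}
    (hv : v ∈ Submodule.span ℂ {ket 0 j k, ket 1 j k}) : CompProd3 v := by
  obtain ⟨a, b, rfl⟩ := Submodule.mem_span_pair.mp hv
  refine ⟨![a, b], Pi.single j 1, Pi.single k 1, fun i' j' k' => ?_⟩
  fin_cases i' <;> simp [ket, Pi.single_apply, ← ite_and, and_comm]

end ThreeQubit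

/-- The W-UEB is an unextendible entangled basis: every three-qubit state orthogonal
to all six W-UEB states is completely product. -/
theorem wUEB_orthocomplement_completely_product
    (v : Fin 2 → Fin 2 → Fin 2 → ℂ) (hv : ∀ m : Fin 6, ip3 (ψW m) v = 0) :
    CompProd3 v := by
  have hspan : v ∈ Submodule.span ℂ {ket 0 1 1, ket 1 1 1} :=
    (forall_ip3_wKets_eq_zero_iff_mem_span v).mp ((forall_ip3_ψW_eq_zero_iff_wKets v).mp hv)
  exact compProd3_of_mem_span_ket hspan
end
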